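/- Let p ≥ 1 and, for each vertex t ≠ s, let λ(t) be the maximum number of pairwise edge-disjoint paths from s to t in G and σ(t) = min(p, λ(t)). Then there exists H ⊆ E such that: no edge of H enters s; every vertex t ≠ s has exactly σ(t) edges of H entering it (so |H| = Σ_{t≠s} σ(t)); and for every t ≠ s with σ(t) ≥ 1 there exists a family of σ(t) pairwise edge-disjoint paths from s to t, all of whose edges belong to H, whose total cost is minimum among all families of σ(t) pairwise edge-disjoint paths from s to t in G. Moreover this size is optimal: any H' ⊆ E containing, for every t ≠ s, σ(t) pairwise edge-disjoint paths from s to t must satisfy |H'| ≥ Σ_{t≠s} σ(t). -/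

import Mathlib

open scoped Classical

namespace MultipathPreserver

variable {V : Type*}

/-- `IsPath F u v L`: `L` is a list of pairwise-distinct directed edges
`e_1, …, e_k` with `e_j = (x_{j-1}, x_j)`, `x_0 = u`, `x_k = v`, all edges
belonging to the edge set `F`. The empty list is a path from `u` to `u`. -/
def IsPath (F : Set (V × V)) (u v : V) (L : List (V × V)) : Prop :=
  L.Nodup ∧ (∀ e ∈ L, e ∈ F) ∧ List.Chain' (fun e f => e.2 = f.1) L ∧
  (∀ e ∈ L.head?, e.1 = u) ∧ (∀ e ∈ L.getLast?, e.2 = v) ∧ (L = [] → u = v)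

/-- The cost of a path (sum of edge costs w.r.t. the cost function `w`). -/
def pathCost (w : V × V → ℝ) (L : List (V × V)) : ℝ := (L.map w).sum

/-- A family of `k` pairwise edge-disjoint paths from `u` to `v` in the graph
with edge set `F`. -/
def IsDisjointFamily (F : Set (V × V)) (u v : V) {k : ℕ}
    (P : Fin k → List (V × V)) : Prop :=
  (∀ j, IsPath F u v (P j)) ∧ ∀ j j' : Fin k, j ≠ j' → ∀ e ∈ P j, e ∉ P j'

/-- The total cost of a family of paths. -/
def famCost (w : V × V → ℝ) {k : ℕ} (P : Fin k → List (V × V)) : ℝ :=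
  ∑ j, pathCost w (P j)

/-- A family of `k` pairwise edge-disjoint paths from `u` to `v` whose total
cost is minimum among all such families. -/
def IsMinFamily (F : Set (V × V)) (w : V × V → ℝ) (u v : V) {k : ℕ}
    (P : Fin k → List (V × V)) : Prop :=
  IsDisjointFamily F u v P ∧
  ∀ Q : Fin k → List (V × V), IsDisjointFamily F u v Q → famCost w P ≤ famCost w Q

/-- `S` induces `k` edge-disjoint paths of minimum total cost from `u` to `v`
in the graph with edge set `F` and costs `w`: `S` is exactly the set of edges
used by some minimum-total-cost family of `k` pairwise edge-disjoint paths. -/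
def Induces (F : Set (V × V)) (w : V × V → ℝ) (u v : V) (k : ℕ)
    (S : Set (V × V)) : Prop :=
  ∃ P : Fin k → List (V × V), IsMinFamily F w u v P ∧ S = {e | ∃ j, e ∈ P j}

/-- As `Induces`, but additionally the paths of the family are simple
(their vertices `u, (P j)_1.2, …` are pairwise distinct). -/
def InducesSimple (F : Set (V × V)) (w : V × V → ℝ) (u v : V) (k : ℕ)
    (S : Set (V × V)) : Prop :=
  ∃ P : Fin k → List (V × V), IsMinFamily F w u v P ∧
    (∀ j, (u :: (P j).map Prod.snd).Nodup) ∧ S = {e | ∃ j, e ∈ P j}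

/-- Edge set of the residual network `G_S`: edges of `E \ S` together with the
reversals of the edges of `S`. -/
def resEdges (E S : Set (V × V)) : Set (V × V) :=
  (E \ S) ∪ {e | (e.2, e.1) ∈ S}

/-- Cost function of the residual network `G_S`: a reversed edge `(v,u)` with
`(u,v) ∈ S` costs `-c (u,v)`; any other edge keeps its cost. -/
noncomputable def resCost (c : V × V → ℝ) (S : Set (V × V)) (e : V × V) : ℝ :=
  if (e.2, e.1) ∈ S then -c (e.2, e.1) else c e

/-- `η(L)`: the number of edges of `L` belonging to `E \ H`. -/
noncomputable def eta (E H : Set (V × V)) (L : List (V × V)) : ℕ :=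
  L.countP (fun e => decide (e ∈ E ∧ e ∉ H))

/-- The measure `|π| = (c_S(π), η(π))` of a path, compared lexicographically. -/
noncomputable def pmeasure (w : V × V → ℝ) (E H : Set (V × V))
    (L : List (V × V)) : ℝ × ℕ :=
  (pathCost w L, eta E H L)

/-- Strict lexicographic order on measures. -/
def lexLt (a b : ℝ × ℕ) : Prop := a.1 < b.1 ∨ (a.1 = b.1 ∧ a.2 < b.2)

/-- Lexicographic order on measures. -/
def lexLe (a b : ℝ × ℕ) : Prop := a.1 < b.1 ∨ (a.1 = b.1 ∧ a.2 ≤ b.2)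

/-- `Π(u,v; G_S)`: the paths from `u` to `v` in the residual network `G_S`
that are minimal w.r.t. the lexicographic order `≼` on `|·| = (c_S(·), η(·))`. -/
def PiMin (E H : Set (V × V)) (c : V × V → ℝ) (S : Set (V × V)) (u v : V) :
    Set (List (V × V)) :=
  {L | IsPath (resEdges E S) u v L ∧
    ∀ L', IsPath (resEdges E S) u v L' →
      lexLe (pmeasure (resCost c S) E H L) (pmeasure (resCost c S) E H L')}

/-- The number of edges of the prefix `π[s : q(π)]` of a path `π`:
one more than the index of the last edge of `π`, other than the final edge,
belonging to `E \ H`; `0` if no such edge exists. -/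
noncomputable def qPrefixLen (E H : Set (V × V)) (L : List (V × V)) : ℕ :=
  L.dropLast.length -
    List.findIdx (fun e => decide (e ∈ E ∧ e ∉ H)) L.dropLast.reverse

/-- `q(π)`: the last internal vertex of `π` whose incoming edge along `π`
belongs to `E \ H`, and `s` if no such vertex exists.  The prefix `π[s:q(π)]`
is `L.take (qPrefixLen E H L)` and the suffix `π[q(π):t]` is
`L.drop (qPrefixLen E H L)`. -/
noncomputable def qVert (E H : Set (V × V)) (s : V) (L : List (V × V)) : V :=
  ((L.take (qPrefixLen E H L)).getLast?).elim s Prod.snd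

/-- `λ(t)`: the maximum number of pairwise edge-disjoint paths from `s` to `t`
in the graph with edge set `E`. -/
noncomputable def lambda (E : Set (V × V)) (s t : V) : ℕ :=
  sSup {k : ℕ | ∃ P : Fin k → List (V × V), IsDisjointFamily E s t P}

section Flows

/-- `SimplePath A u v L`: `L` lists the edges of a vertex-simple path from `u` to `v` in `A`. -/
inductive SimplePath (A : Finset (V × V)) : V → V → List (V × V) → Prop
  | nil (u : V) : SimplePath A u u []
  | cons {u w v : V} {L : List (V × V)} : (u, w) ∈ A → SimplePath A w v L → u ≠ w → u ≠ v →
      (∀ e ∈ L, e.1 ≠ u ∧ e.2 ≠ u) → SimplePath A u v ((u, w) :: L)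

namespace SimplePath

variable {A : Finset (V × V)} {u v : V} {L : List (V × V)}

theorem mem (h : SimplePath A u v L) : ∀ e ∈ L, e ∈ A := by
  induction h with
  | nil => simp
  | cons hA _ _ _ _ ih => simpa using ⟨hA, fun a b => ih (a, b)⟩

theorem mono {B : Finset (V × V)} (h : SimplePath A u v L) (hAB : A ⊆ B) : SimplePath B u v L := by
  induction h with
  | nil u => exact .nil u
  | cons hA _ hw hv hne ih => exact .cons (hAB hA) ih hw hv hne

theorem snd_ne_start (h : SimplePath A u v L) : ∀ e ∈ L, e.2 ≠ u := by
  cases h with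
  | nil => simp
  | cons _ _ hw _ hL =>
    intro e he
    rcases List.mem_cons.1 he with rfl | he
    · exact hw.symm
    · exact (hL e he).2

theorem fst_ne_end (h : SimplePath A u v L) : ∀ e ∈ L, e.1 ≠ v := by
  induction h with
  | nil => simp
  | cons _ _ _ hv _ ih =>
    intro e he
    rcases List.mem_cons.1 he with rfl | he
    · exact hv
    · exact ih e he

theorem exists_suffix (h : SimplePath A u v L) {x : V}
    (hx : ∃ e ∈ L, e.1 = x ∨ e.2 = x) : ∃ L', SimplePath A x v L' := by
  induction h with
  | nil => simp at hx
  | cons hA hL hw hv hne ih =>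
    obtain ⟨e, he, hx⟩ := hx
    rcases List.mem_cons.1 he with rfl | he
    · rcases hx with rfl | rfl
      · exact ⟨_, .cons hA hL hw hv hne⟩
      · exact ⟨_, hL⟩
    · exact ih ⟨e, he, hx⟩

theorem exists_of_reachable (h : Relation.ReflTransGen (fun a b => (a, b) ∈ A) u v) :
    ∃ L, SimplePath A u v L := by
  induction h using Relation.ReflTransGen.head_induction_on with
  | refl => exact ⟨_, .nil v⟩
  | @head a b hab _ ih =>
    obtain ⟨L, hL⟩ := ih
    by_cases hav : a = v
    · subst hav; exact ⟨_, .nil a⟩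
    by_cases hb : a = b
    · subst hb; exact ⟨_, hL⟩
    by_cases hx : ∃ e ∈ L, e.1 = a ∨ e.2 = a
    · exact hL.exists_suffix hx
    · push Not at hx
      exact ⟨_, .cons hab hL hb hav hx⟩

theorem isPath {E : Set (V × V)} (hE : ∀ e ∈ A, e ∈ E) (h : SimplePath A u v L) :
    IsPath E u v L := by
  induction h with
  | nil => exact ⟨by simp, by simp, List.IsChain.nil, by simp, by simp, fun _ => rfl⟩
  | @cons u w v L hA hL hw hv hne ih =>
    obtain ⟨hnd, hmem, hch, hhd, hlast, hnil⟩ := ih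
    refine ⟨List.nodup_cons.2 ⟨fun hmem => (hne _ hmem).1 rfl, hnd⟩, ?_, ?_, by simp, ?_, by simp⟩
    · simpa using ⟨hE _ hA, fun a b => hmem (a, b)⟩
    · exact List.isChain_cons.2 ⟨fun e he => (hhd e he).symm, hch⟩
    · cases L with
      | nil => simpa using hnil rfl
      | cons a L => simpa using hlast

end SimplePath

theorem IsDisjointFamily.mono {E : Set (V × V)} {s t : V} {k l : ℕ} {P : Fin k → List (V × V)}
    (h : IsDisjointFamily E s t P) (hl : l ≤ k) :
    ∃ Q : Fin l → List (V × V), IsDisjointFamily E s t Q :=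
  ⟨fun j => P (Fin.castLE hl j), fun _ => h.1 _,
    fun _ _ hij => h.2 _ _ fun h => hij (Fin.castLE_injective hl h)⟩

variable [DecidableEq V]

/-- The contribution of the edge `e` to the net out-degree of `v`. -/
def incidence (v : V) (e : V × V) : ℤ :=
  (if e.1 = v then 1 else 0) - (if e.2 = v then 1 else 0)

/-- The net out-degree of `v` in the edge set `F`. -/
def excess (F : Finset (V × V)) (v : V) : ℤ := ∑ e ∈ F, incidence v e

/-- `F` is an integral unit-capacity flow of value `k` from `s` to `t`, given by its support. -/
structure IsFlow (E : Set (V × V)) (s t : V) (k : ℕ) (F : Finset (V × V)) : Prop where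
  subset : ∀ e ∈ F, e ∈ E
  excess_eq : ∀ v, excess F v = k * incidence v (s, t)

theorem IsPath.sum_incidence {E : Set (V × V)} {u v : V} {L : List (V × V)}
    (h : IsPath E u v L) (x : V) : (L.map (incidence x)).sum = incidence x (u, v) := by
  induction L generalizing u with
  | nil => simp [h.2.2.2.2.2 rfl, incidence]
  | cons e L ih =>
    obtain ⟨hnd, hmem, hch, hhd, hlast, -⟩ := h
    obtain rfl : e.1 = u := hhd e rfl
    have hch' := List.isChain_cons.1 hch
    have := @ih e.2 ⟨(List.nodup_cons.1 hnd).2, fun f hf => hmem f (List.mem_cons_of_mem _ hf),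
      hch'.2, fun f hf => (hch'.1 f hf).symm, ?_, ?_⟩
    · rw [List.map_cons, List.sum_cons, this]
      simp [incidence]
    · cases L with
      | nil => simp
      | cons a L => simpa using hlast
    · rintro rfl
      exact hlast e rfl

theorem sum_excess (A : Finset (V × V)) (R : Finset V) :
    ∑ v ∈ R, excess A v =
      ∑ e ∈ A, ((if e.1 ∈ R then 1 else 0) - (if e.2 ∈ R then 1 else 0)) := by
  simp only [excess, incidence]
  rw [Finset.sum_comm]
  simp [Finset.sum_sub_distrib]

theorem sum_incidence (R : Finset V) (e : V × V) :
    ∑ v ∈ R, incidence v e = (if e.1 ∈ R then 1 else 0) - (if e.2 ∈ R then 1 else 0) := by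
  simp [incidence, Finset.sum_sub_distrib]

/-- The edges used by a family of paths. -/
def familyEdges {k : ℕ} (P : Fin k → List (V × V)) : Finset (V × V) :=
  Finset.univ.biUnion fun j => (P j).toFinset

theorem mem_familyEdges {k : ℕ} {P : Fin k → List (V × V)} {e : V × V} :
    e ∈ familyEdges P ↔ ∃ j, e ∈ P j := by
  simp [familyEdges]

namespace IsDisjointFamily

variable {E : Set (V × V)} {s t : V} {k : ℕ} {P : Fin k → List (V × V)}

theorem sum_familyEdges {M : Type*} [AddCommMonoid M] (h : IsDisjointFamily E s t P)
    (w : V × V → M) : ∑ e ∈ familyEdges P, w e = ∑ j, ((P j).map w).sum := by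
  rw [familyEdges, Finset.sum_biUnion]
  · exact Finset.sum_congr rfl fun j _ => List.sum_toFinset w (h.1 j).1
  · intro i _ j _ hij
    exact Finset.disjoint_left.2 fun e he he' =>
      h.2 i j hij e (List.mem_toFinset.1 he) (List.mem_toFinset.1 he')

theorem isFlow (h : IsDisjointFamily E s t P) : IsFlow E s t k (familyEdges P) where
  subset e he := by
    obtain ⟨j, hj⟩ := mem_familyEdges.1 he
    exact (h.1 j).2.1 e hj
  excess_eq v := by
    rw [excess, h.sum_familyEdges, Finset.sum_congr rfl fun j _ => (h.1 j).sum_incidence v]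
    simp

end IsDisjointFamily

theorem excess_sdiff {F C : Finset (V × V)} (h : C ⊆ F) (v : V) :
    excess (F \ C) v = excess F v - excess C v :=
  eq_sub_of_add_eq (Finset.sum_sdiff h)

theorem excess_toFinset {E : Set (V × V)} {u v : V} {L : List (V × V)} (h : IsPath E u v L)
    (x : V) : excess L.toFinset x = incidence x (u, v) := by
  rw [excess, List.sum_toFinset _ h.1, h.sum_incidence]

namespace IsFlow

variable {E : Set (V × V)} {s t : V} {k : ℕ} {F : Finset (V × V)}

theorem exists_simplePath [Fintype V] (h : IsFlow E s t (k + 1) F) : ∃ L, SimplePath F s t L := by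
  apply SimplePath.exists_of_reachable
  by_contra ht
  set R := Finset.univ.filter fun v => Relation.ReflTransGen (fun a b => (a, b) ∈ F) s v with hR
  have h1 : ∑ v ∈ R, excess F v ≤ 0 := by
    rw [sum_excess]
    refine Finset.sum_nonpos fun e he => ?_
    have : e.1 ∈ R → e.2 ∈ R := by
      simp only [hR, Finset.mem_filter_univ]
      exact fun h => h.tail he
    split_ifs <;> simp_all
  have h2 : ∑ v ∈ R, excess F v = k + 1 := by
    have hs : s ∈ R := by simp [hR, Relation.ReflTransGen.refl]
    have ht : t ∉ R := by simpa [hR] using ht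
    simp_rw [h.excess_eq]
    rw [← Finset.mul_sum, sum_incidence]
    simp [hs, ht]
  omega

/-- Flow decomposition into edge-disjoint simple paths. -/
theorem exists_simplePaths [Fintype V] (h : IsFlow E s t k F) :
    ∃ P : Fin k → List (V × V), (∀ j, SimplePath F s t (P j)) ∧
      ∀ i j, i ≠ j → ∀ e ∈ P i, e ∉ P j := by
  induction k generalizing F with
  | zero => exact ⟨Fin.elim0, fun j => j.elim0, fun j => j.elim0⟩
  | succ k ih =>
    obtain ⟨L, hL⟩ := h.exists_simplePath
    have hsub : L.toFinset ⊆ F := fun e he => hL.mem e (List.mem_toFinset.1 he)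
    have hflow : IsFlow E s t k (F \ L.toFinset) :=
      { subset := fun e he => h.subset e (Finset.mem_sdiff.1 he).1
        excess_eq := fun v => by
          rw [excess_sdiff hsub, h.excess_eq, excess_toFinset (hL.isPath h.subset)]
          push_cast
          ring }
    obtain ⟨P, hP, hd⟩ := ih hflow
    have hPL : ∀ j, ∀ e ∈ P j, e ∉ L := fun j e he heL =>
      (Finset.mem_sdiff.1 ((hP j).mem e he)).2 (List.mem_toFinset.2 heL)
    refine ⟨Fin.cons L P, ?_, ?_⟩
    · refine Fin.cases hL fun j => ?_
      exact (hP j).mono Finset.sdiff_subset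
    · refine Fin.cases ?_ fun i => ?_ <;> refine Fin.cases ?_ fun j => ?_
      · simp
      · exact fun _ e he he' => hPL j e he' he
      · exact fun _ e he he' => hPL i e he he'
      · exact fun hij => hd i j fun h => hij (congrArg Fin.succ h)

end IsFlow


/-- The edges of the residual difference of `F` and `G`: edges of `F \ G`, and reversals of
edges of `G \ F`. -/
def diffEdges (F G : Finset (V × V)) : Finset (V × V) :=
  F \ G ∪ (G \ F).image Prod.swap

/-- Shifting `C ⊆ diffEdges F G` from `F` to `G` preserves every total weight, and changes the
excesses by that of `C`. -/
theorem exists_exchange {E : Set (V × V)} (hanti : ∀ e ∈ E, (e.2, e.1) ∉ E)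
    {F G C : Finset (V × V)} (hF : ∀ e ∈ F, e ∈ E) (hG : ∀ e ∈ G, e ∈ E)
    (hC : C ⊆ diffEdges F G) :
    ∃ F' G' : Finset (V × V), (∀ e ∈ F', e ∈ E) ∧ (∀ e ∈ G', e ∈ E) ∧
      (∀ v, excess F' v = excess F v - excess C v) ∧
      (∀ v, excess G' v = excess G v + excess C v) ∧
      (∀ w : V × V → ℝ, ∑ e ∈ F', w e + ∑ e ∈ G', w e = ∑ e ∈ F, w e + ∑ e ∈ G, w e) ∧
      ∀ e ∈ C, e ∈ F → e ∉ F' := by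
  set P := C ∩ (F \ G) with hP
  set N := (G \ F).filter fun e => e.swap ∈ C with hN
  have hPF : P ⊆ F := fun e he => (Finset.mem_sdiff.1 (Finset.mem_inter.1 he).2).1
  have hPG : Disjoint G P := Finset.disjoint_right.2 fun e he =>
    (Finset.mem_sdiff.1 (Finset.mem_inter.1 he).2).2
  have hNG : N ⊆ G := fun e he => (Finset.mem_sdiff.1 (Finset.mem_filter.1 he).1).1
  have hNF : Disjoint F N := Finset.disjoint_right.2 fun e he =>
    (Finset.mem_sdiff.1 (Finset.mem_filter.1 he).1).2
  have hCeq : C = P ∪ N.image Prod.swap := by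
    ext e
    have := @hC e
    simp only [diffEdges, Finset.mem_union, Finset.mem_image, hP, hN, Finset.mem_inter,
      Finset.mem_filter] at this ⊢
    constructor
    · intro he
      rcases this he with h | ⟨f, hf, rfl⟩
      · exact Or.inl ⟨he, h⟩
      · exact Or.inr ⟨f, ⟨hf, he⟩, rfl⟩
    · rintro (h | ⟨f, hf, rfl⟩)
      · exact h.1
      · exact hf.2
  have hPN : Disjoint P (N.image Prod.swap) := Finset.disjoint_left.2 fun e he he' => by
    obtain ⟨f, hf, rfl⟩ := Finset.mem_image.1 he'
    exact hanti f (hG f (hNG hf)) (hF _ (hPF he))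
  have hexC : ∀ v, excess C v = excess P v - excess N v := fun v => by
    rw [hCeq, excess, Finset.sum_union hPN, Finset.sum_image (Prod.swap_injective.injOn),
      sub_eq_add_neg]
    congr 1
    rw [excess, ← Finset.sum_neg_distrib]
    exact Finset.sum_congr rfl fun e _ => by simp [incidence]
  have hF' : Disjoint (F \ P) N := hNF.mono_left Finset.sdiff_subset
  have hG' : Disjoint (G \ N) P := hPG.mono_left Finset.sdiff_subset
  refine ⟨F \ P ∪ N, G \ N ∪ P, ?_, ?_, ?_, ?_, ?_, ?_⟩
  · intro e he
    rcases Finset.mem_union.1 he with h | h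
    · exact hF e (Finset.mem_sdiff.1 h).1
    · exact hG e (hNG h)
  · intro e he
    rcases Finset.mem_union.1 he with h | h
    · exact hG e (Finset.mem_sdiff.1 h).1
    · exact hF e (hPF h)
  · intro v
    have h1 : excess (F \ P ∪ N) v = excess (F \ P) v + excess N v := Finset.sum_union hF'
    rw [h1, excess_sdiff hPF, hexC]
    ring
  · intro v
    have h1 : excess (G \ N ∪ P) v = excess (G \ N) v + excess P v := Finset.sum_union hG'
    rw [h1, excess_sdiff hNG, hexC]
    ring
  · intro w
    rw [Finset.sum_union hF', Finset.sum_union hG', ← Finset.sum_sdiff hPF,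
      ← Finset.sum_sdiff hNG]
    ring
  · intro e he heF heF'
    have hnG : e ∉ G := by
      rcases Finset.mem_union.1 (hC he) with h | h
      · exact (Finset.mem_sdiff.1 h).2
      · obtain ⟨f, hf, rfl⟩ := Finset.mem_image.1 h
        exact absurd (hF _ heF) (hanti f (hG f (Finset.mem_sdiff.1 hf).1))
    have heP : e ∈ P := Finset.mem_inter.2 ⟨he, Finset.mem_sdiff.2 ⟨heF, hnG⟩⟩
    rcases Finset.mem_union.1 heF' with h | h
    · exact (Finset.mem_sdiff.1 h).2 heP
    · exact hnG (hNG h)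

theorem excess_diffEdges {E : Set (V × V)} (hanti : ∀ e ∈ E, (e.2, e.1) ∉ E)
    {F G : Finset (V × V)} (hF : ∀ e ∈ F, e ∈ E) (hG : ∀ e ∈ G, e ∈ E) (v : V) :
    excess (diffEdges F G) v = excess F v - excess G v := by
  have hd : Disjoint (F \ G) ((G \ F).image Prod.swap) := Finset.disjoint_left.2 fun e he he' => by
    obtain ⟨f, hf, rfl⟩ := Finset.mem_image.1 he'
    exact hanti f (hG f (Finset.mem_sdiff.1 hf).1) (hF _ (Finset.mem_sdiff.1 he).1)
  have h1 : ∑ e ∈ (G \ F).image Prod.swap, incidence v e = - excess (G \ F) v := by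
    rw [Finset.sum_image (Prod.swap_injective.injOn), excess, ← Finset.sum_neg_distrib]
    exact Finset.sum_congr rfl fun e _ => by simp [incidence]
  have h2 := Finset.sum_sdiff_sub_sum_sdiff (s₁ := F) (s₂ := G) (f := incidence v)
  rw [excess, diffEdges, Finset.sum_union hd, h1]
  simp only [excess] at h2 ⊢
  linarith

/-- `F` is a flow of least cost with respect to `c`, ties being broken by `δ`. -/
structure IsLexMinFlow (E : Set (V × V)) (c δ : V × V → ℝ) (s t : V) (k : ℕ)
    (F : Finset (V × V)) : Prop extends IsFlow E s t k F where
  le : ∀ F', IsFlow E s t k F' → ∑ e ∈ F, c e ≤ ∑ e ∈ F', c e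
  le_of_eq : ∀ F', IsFlow E s t k F' → ∑ e ∈ F, c e = ∑ e ∈ F', c e →
    ∑ e ∈ F, δ e ≤ ∑ e ∈ F', δ e

theorem IsFlow.exists_isLexMinFlow [Fintype V] {E : Set (V × V)} {s t : V} {k : ℕ}
    {F : Finset (V × V)} (h : IsFlow E s t k F) (c δ : V × V → ℝ) :
    ∃ G, IsLexMinFlow E c δ s t k G := by
  obtain ⟨G, hG, hmin⟩ := (Finset.univ.filter fun F => IsFlow E s t k F).exists_min_image
    (fun F => toLex (∑ e ∈ F, c e, ∑ e ∈ F, δ e)) ⟨F, by simpa using h⟩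
  simp only [Finset.mem_filter_univ, Prod.Lex.toLex_le_toLex] at hG hmin
  refine ⟨G, hG, fun F' hF' => ?_, fun F' hF' heq => ?_⟩
  · rcases hmin F' hF' with h | h
    · exact h.le
    · exact h.1.le
  · rcases hmin F' hF' with h | h
    · exact absurd heq h.ne
    · exact h.2

/-- Positive weights separating all finite edge sets. -/
theorem exists_injective_weight (α : Type*) [Fintype α] :
    ∃ δ : α → ℝ, (∀ e, 0 < δ e) ∧ Function.Injective fun F : Finset α => ∑ e ∈ F, δ e := by
  let f : α ↪ ℕ := (Fintype.equivFin α).toEmbedding.trans Fin.valEmbedding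
  refine ⟨fun e => 2 ^ f e, fun e => by positivity, fun F G h => ?_⟩
  apply Finset.map_injective f
  apply Finset.geomSum_injective le_rfl
  simp only [Finset.sum_map]
  beta_reduce at h
  exact_mod_cast h

/-- The edges of `F` entering `y` all belong to the optimal flow `G` with sink `y`, provided that
`G` can only have smaller value than `F` when its value is maximum. -/
theorem IsLexMinFlow.mem_of_snd_eq [Fintype V] {E : Set (V × V)} {c δ : V × V → ℝ} {s t y : V}
    {k l : ℕ} {F G : Finset (V × V)} (hanti : ∀ e ∈ E, (e.2, e.1) ∉ E)
    (hδ : Function.Injective fun F : Finset (V × V) => ∑ e ∈ F, δ e)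
    (hF : IsLexMinFlow E c δ s t k F) (hG : IsLexMinFlow E c δ s y l G)
    (hkl : (∃ G', IsFlow E s y (l + 1) G') → k ≤ l) {e : V × V} (he : e ∈ F) (hy : e.2 = y) :
    e ∈ G := by
  by_contra heG
  obtain ⟨x, y⟩ := e
  obtain rfl : y = _ := hy
  have hAex := excess_diffEdges hanti hF.subset hG.subset
  set A := diffEdges F G with hA
  have heA : (x, y) ∈ A := Finset.mem_union_left _ (Finset.mem_sdiff.2 ⟨he, heG⟩)
  by_cases hyx : Relation.ReflTransGen (fun a b => (a, b) ∈ A) y x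
  · -- A cycle through `(x, y)` may be shifted from `F` to `G`.
    obtain ⟨L, hL⟩ := SimplePath.exists_of_reachable hyx
    have hLe : (x, y) ∉ L.toFinset := fun h => hL.snd_ne_start _ (List.mem_toFinset.1 h) rfl
    have hCex : ∀ v, excess (insert (x, y) L.toFinset) v = 0 := fun v => by
      rw [excess, Finset.sum_insert hLe]
      have := excess_toFinset (hL.isPath (E := (A : Set (V × V))) fun _ h => h) v
      rw [excess] at this
      rw [this]
      simp [incidence]
    obtain ⟨F', G', hF'E, hG'E, hF'ex, hG'ex, hw, hne⟩ := exists_exchange hanti hF.subset hG.subset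
      (C := insert (x, y) L.toFinset) (Finset.insert_subset heA fun f hf =>
        hL.mem f (List.mem_toFinset.1 hf))
    have hF' : IsFlow E s t k F' := ⟨hF'E, fun v => by rw [hF'ex, hCex, hF.excess_eq, sub_zero]⟩
    have hG' : IsFlow E s y l G' := ⟨hG'E, fun v => by rw [hG'ex, hCex, hG.excess_eq, add_zero]⟩
    have h1 := hF.le F' hF'
    have h2 := hG.le G' hG'
    have h3 := hw c
    have h4 := hF.le_of_eq F' hF' (by linarith)
    have h5 := hG.le_of_eq G' hG' (by linarith)
    have h6 := hw δ
    have h7 : F = F' := hδ (le_antisymm h4 (by linarith))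
    exact hne (x, y) (Finset.mem_insert_self _ _) he (h7 ▸ he)
  · -- Otherwise `s` reaches `y`, so `G` may be augmented.
    set R := Finset.univ.filter fun v => Relation.ReflTransGen (fun a b => (a, b) ∈ A) v x with hR
    have hyR : y ∉ R := by simpa [hR] using hyx
    have hxR : x ∈ R := by simp [hR, Relation.ReflTransGen.refl]
    have h1 : 0 < ∑ v ∈ R, excess A v := by
      rw [sum_excess]
      have hle : ∀ f ∈ A, f.2 ∈ R → f.1 ∈ R := fun f hf => by
        simp only [hR, Finset.mem_filter_univ]
        exact fun h => h.head hf
      refine Finset.sum_pos' (fun f hf => ?_) ⟨_, heA, by simp [hxR, hyR]⟩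
      have := hle f hf
      split_ifs <;> simp_all
    simp_rw [hAex, hF.excess_eq, hG.excess_eq] at h1
    rw [Finset.sum_sub_distrib, ← Finset.mul_sum, ← Finset.mul_sum, sum_incidence,
      sum_incidence] at h1
    simp only [hyR, if_false, sub_zero] at h1
    have hsR : s ∈ R ∧ l < k := by
      split_ifs at h1 <;> simp_all <;> omega
    have hsx : Relation.ReflTransGen (fun a b => (a, b) ∈ A) s x := by simpa [hR] using hsR.1
    obtain ⟨L, hL⟩ := SimplePath.exists_of_reachable (hsx.tail heA)
    obtain ⟨F', G', hF'E, hG'E, hF'ex, hG'ex, hw, hne⟩ := exists_exchange hanti hF.subset hG.subset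
      (C := L.toFinset) fun f hf => hL.mem f (List.mem_toFinset.1 hf)
    have hG' : IsFlow E s y (l + 1) G' := ⟨hG'E, fun v => by
      rw [hG'ex, hG.excess_eq, excess_toFinset (hL.isPath (E := (A : Set (V × V))) fun _ h => h)]
      push_cast
      ring⟩
    exact absurd (hkl ⟨G', hG'⟩) (not_le.2 hsR.2)

/-- An optimal flow decomposes exactly into edge-disjoint simple paths. -/
theorem IsLexMinFlow.exists_simplePaths [Fintype V] {E : Set (V × V)} {c δ : V × V → ℝ} {s t : V}
    {k : ℕ} {F : Finset (V × V)} (hc : ∀ e ∈ E, 0 ≤ c e) (hδ : ∀ e, 0 < δ e)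
    (hF : IsLexMinFlow E c δ s t k F) :
    ∃ P : Fin k → List (V × V), (∀ j, SimplePath F s t (P j)) ∧
      IsDisjointFamily E s t P ∧ familyEdges P = F := by
  obtain ⟨P, hP, hd⟩ := hF.toIsFlow.exists_simplePaths
  have hfam : IsDisjointFamily E s t P := ⟨fun j => (hP j).isPath hF.subset, hd⟩
  have hsub : familyEdges P ⊆ F := fun e he => by
    obtain ⟨j, hj⟩ := mem_familyEdges.1 he
    exact (hP j).mem e hj
  refine ⟨P, hP, hfam, hsub.antisymm fun e he => ?_⟩
  by_contra heP
  have h1 := hF.le_of_eq _ hfam.isFlow (le_antisymm (hF.le _ hfam.isFlow)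
    (Finset.sum_le_sum_of_subset_of_nonneg hsub fun e he _ => hc e (hF.subset e he)))
  exact absurd h1 (not_le.2 (Finset.sum_lt_sum_of_subset hsub he heP (hδ e)
    fun e _ _ => (hδ e).le))

namespace IsFlow

variable {E : Set (V × V)} {s t : V} {k : ℕ} {F : Finset (V × V)}

theorem le_card_filter_snd (h : IsFlow E s t k F) (hst : t ≠ s) :
    k ≤ (F.filter fun e => e.2 = t).card := by
  have h1 := h.excess_eq t
  simp only [excess, incidence, Finset.sum_sub_distrib, Finset.sum_boole] at h1
  simp only [hst.symm, if_true, if_false] at h1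
  omega

theorem card_filter_snd (h : IsFlow E s t k F) (hst : t ≠ s) (ht : ∀ e ∈ F, e.1 ≠ t) :
    (F.filter fun e => e.2 = t).card = k := by
  have h1 := h.excess_eq t
  have h2 : (F.filter fun e => e.1 = t).card = 0 := by
    simpa [Finset.filter_eq_empty_iff] using fun a b h => ht (a, b) h
  simp only [excess, incidence, Finset.sum_sub_distrib, Finset.sum_boole] at h1
  simp only [hst.symm, if_true, if_false] at h1
  omega

end IsFlow

theorem exists_isDisjointFamily_iff [Fintype V] {E : Set (V × V)} {s t : V} (hst : t ≠ s)
    {k : ℕ} : (∃ P : Fin k → List (V × V), IsDisjointFamily E s t P) ↔ k ≤ lambda E s t := by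
  have hbdd : BddAbove {k : ℕ | ∃ P : Fin k → List (V × V), IsDisjointFamily E s t P} := by
    refine ⟨Fintype.card (V × V), ?_⟩
    rintro l ⟨P, hP⟩
    exact (hP.isFlow.le_card_filter_snd hst).trans (Finset.card_le_univ _)
  refine ⟨fun h => le_csSup hbdd h, fun h => ?_⟩
  obtain ⟨P, hP⟩ := Nat.sSup_mem (s := {k : ℕ | ∃ P : Fin k → List (V × V),
    IsDisjointFamily E s t P}) ⟨0, Fin.elim0, fun j => j.elim0, fun j => j.elim0⟩ hbdd
  exact hP.mono h

theorem exists_isFlow_iff [Fintype V] {E : Set (V × V)} {s t : V} (hst : t ≠ s)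
    {k : ℕ} : (∃ F, IsFlow E s t k F) ↔ k ≤ lambda E s t := by
  rw [← exists_isDisjointFamily_iff hst]
  constructor
  · rintro ⟨F, hF⟩
    obtain ⟨P, hP, hd⟩ := hF.exists_simplePaths
    exact ⟨P, fun j => (hP j).isPath hF.subset, hd⟩
  · rintro ⟨P, hP⟩
    exact ⟨_, hP.isFlow⟩

end Flows

/-- Without the outconnectivity assumption: with
`σ(t) = min p (λ(t))`, there is `H ⊆ E` with no edge entering `s`, exactly
`σ(t)` edges entering each `t ≠ s` (so `|H| = Σ_{t ≠ s} σ(t)`), containing a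
minimum-total-cost family of `σ(t)` edge-disjoint paths from `s` to `t` for
every `t ≠ s` with `σ(t) ≥ 1`; moreover, every `H' ⊆ E` containing `σ(t)`
edge-disjoint paths from `s` to `t` for each `t ≠ s` has
`|H'| ≥ Σ_{t ≠ s} σ(t)`. -/
theorem exists_optimal_preserver_general [Fintype V] [DecidableEq V]
    (E : Set (V × V)) (c : V × V → ℝ) (s : V)
    (hirr : ∀ e ∈ E, e.1 ≠ e.2)
    (hanti : ∀ e ∈ E, (e.2, e.1) ∉ E)
    (hc : ∀ e ∈ E, 0 ≤ c e)
    (p : ℕ) (hp : 1 ≤ p) :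
    ∃ H ⊆ E,
      (∀ e ∈ H, e.2 ≠ s) ∧
      (∀ t, t ≠ s → {e ∈ H | e.2 = t}.ncard = min p (lambda E s t)) ∧
      H.ncard = ∑ t ∈ Finset.univ.erase s, min p (lambda E s t) ∧
      (∀ t, t ≠ s → 1 ≤ min p (lambda E s t) →
        ∃ P : Fin (min p (lambda E s t)) → List (V × V),
          IsMinFamily E c s t P ∧ ∀ j, ∀ e ∈ P j, e ∈ H) ∧
      ∀ H' ⊆ E,
        (∀ t, t ≠ s → ∃ P : Fin (min p (lambda E s t)) → List (V × V),
          IsDisjointFamily E s t P ∧ ∀ j, ∀ e ∈ P j, e ∈ H') →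
        (∑ t ∈ Finset.univ.erase s, min p (lambda E s t)) ≤ H'.ncard := by
  obtain ⟨δ, hδpos, hδ⟩ := exists_injective_weight (V × V)
  have hex : ∀ t, ∃ F, t ≠ s → IsLexMinFlow E c δ s t (min p (lambda E s t)) F := fun t => by
    by_cases hts : t = s
    · exact ⟨∅, fun h => absurd hts h⟩
    · obtain ⟨F, hF⟩ := (exists_isFlow_iff hts).2 (min_le_right p (lambda E s t))
      obtain ⟨G, hG⟩ := hF.exists_isLexMinFlow c δ
      exact ⟨G, fun _ => hG⟩
  choose f hf using hex
  have hpaths := fun t ht => (hf t ht).exists_simplePaths hc hδpos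
  have hfst : ∀ t, t ≠ s → ∀ e ∈ f t, e.1 ≠ t ∧ e.2 ≠ s := fun t ht e he => by
    obtain ⟨P, hP, -, hPf⟩ := hpaths t ht
    rw [← hPf] at he
    obtain ⟨j, hj⟩ := mem_familyEdges.1 he
    exact ⟨(hP j).fst_ne_end e hj, (hP j).snd_ne_start e hj⟩
  set H : Finset (V × V) := (Finset.univ.erase s).biUnion f with hH
  have hmemH : ∀ e, e ∈ H ↔ ∃ t, t ≠ s ∧ e ∈ f t := fun e => by simp [hH]
  have hHs : ∀ e ∈ H, e.2 ≠ s := fun e he => by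
    obtain ⟨t, ht, het⟩ := (hmemH e).1 he
    exact (hfst t ht e het).2
  have hin : ∀ t, t ≠ s → (H.filter fun e => e.2 = t).card = min p (lambda E s t) := by
    intro t ht
    rw [← (hf t ht).card_filter_snd ht fun e he => (hfst t ht e he).1]
    congr 1
    ext e
    simp only [Finset.mem_filter, hmemH]
    refine ⟨?_, fun h => ⟨⟨t, ht, h.1⟩, h.2⟩⟩
    rintro ⟨⟨u, hu, heu⟩, rfl⟩
    refine ⟨(hf u hu).mem_of_snd_eq hanti hδ (hf _ ht) (fun h => ?_) heu rfl, rfl⟩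
    have := (exists_isFlow_iff ht).1 h
    omega
  have hncard : ∀ (K : Set (V × V)) (t : V),
      {e ∈ K | e.2 = t}.ncard = (K.toFinset.filter fun e => e.2 = t).card := fun K t => by
    rw [← Set.ncard_coe_finset]
    congr 1
    ext e
    simp
  refine ⟨H, fun e he => ?_, hHs, fun t ht => ?_, ?_, fun t ht _ => ?_, fun H' hH' hfam => ?_⟩
  · obtain ⟨t, ht, het⟩ := (hmemH e).1 he
    exact (hf t ht).subset e het
  · rw [hncard, Finset.toFinset_coe, hin t ht]
  · rw [Set.ncard_coe_finset, Finset.card_eq_sum_card_fiberwise (f := Prod.snd)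
      (t := Finset.univ.erase s) fun e he => by simpa using hHs e he]
    exact Finset.sum_congr rfl fun t ht => hin t (Finset.ne_of_mem_erase ht)
  · obtain ⟨P, -, hfam, hPf⟩ := hpaths t ht
    refine ⟨P, ⟨hfam, fun Q hQ => ?_⟩, fun j e he => ?_⟩
    · have h1 := (hf t ht).le _ hQ.isFlow
      rwa [← hPf, hfam.sum_familyEdges, hQ.sum_familyEdges] at h1
    · exact (hmemH e).2 ⟨t, ht, hPf ▸ mem_familyEdges.2 ⟨j, he⟩⟩
  · have hH'card : ∀ t ∈ Finset.univ.erase s, min p (lambda E s t) ≤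
        (H'.toFinset.filter fun e => e.2 = t).card := fun t ht => by
      have hts := Finset.ne_of_mem_erase ht
      obtain ⟨P, hP, hPH⟩ := hfam t hts
      refine (hP.isFlow.le_card_filter_snd hts).trans
        (Finset.card_le_card (Finset.filter_subset_filter _ fun e he => ?_))
      obtain ⟨j, hj⟩ := mem_familyEdges.1 he
      exact Set.mem_toFinset.2 (hPH j e hj)
    refine (Finset.sum_le_sum hH'card).trans ?_
    rw [Set.ncard_eq_toFinset_card', Finset.card_eq_sum_card_fiberwise (f := Prod.snd)
      (t := Finset.univ) fun e _ => by simp]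
    exact Finset.sum_le_sum_of_subset (Finset.erase_subset _ _)

end MultipathPreserver
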